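/- Let Ω ⊆ ℝ be open, F ∈ C¹ with semiflow φ defined for all t ≥ 0, h continuous, ρ p-admissible, and suppose for every x ∈ Ω₁ = {F ≠ 0} there exists t̄ > 0 with x ∉ φ(t̄, Ω). Then the weighted composition semigroup T_{F,h} is stable on L^p_ρ(Ω) if and only if (1) T_{F,h} is bounded, and (2) whenever λ(Ω₀) > 0 one has h(x) < 0 for λ-a.e. x ∈ Ω₀, where Ω₀ = {F = 0}. -/

import Mathlib

open MeasureTheory Filter Topology

/-- The cocycle h_t(x) = exp(∫₀^t h(φ(s,x)) ds). -/
noncomputable def cocycle (h : ℝ → ℝ) (φ : ℝ → ℝ → ℝ) (t x : ℝ) : ℝ :=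
  Real.exp (∫ s in (0:ℝ)..t, h (φ s x))

/-!
Let `ν = ρ dx` on `Ω`, and let `κ t` be the measure with `‖T(t) f‖^p = ∫ |f|^p dκ t`. As `|f|^p`
ranges over all nonnegative `ν`-integrable functions `g`, stability says that `∫ g dκ t → 0` for
every such `g`, and boundedness that `κ t ≤ M ν` uniformly in `t`. Admissibility gives such a bound
for `t` in bounded intervals, so stability implies boundedness by a gliding hump. Conversely,
`κ t` is carried by `φ(t, Ω)`, which decreases in `t` (solutions of `u' = F u` are unique) and
eventually misses each point of `Ω₁`; for bounded `T` dominated convergence makes the contribution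
of `Ω₁` vanish. On `Ω₀` the flow is the identity and `κ t` has density `exp (t p h)` with respect to
`ν`, which decays in the required sense exactly when `h < 0` almost everywhere on `Ω₀`.
-/

open scoped ENNReal

section DominatedMeasures

variable {α ι : Type*} {mα : MeasurableSpace α} {ν : Measure α}

/- Gliding hump: if no uniform constant existed, suitably normalized indicators of sets `A n` with
`4 ^ n * ν (A n) < κ (i n) (A n)` would sum to a `ν`-integrable function whose integrals against
the `κ (i n)` are unbounded. -/
lemma exists_forall_le_smul_of_lintegral_le {κ : ι → Measure α} (hκ : ∀ i, κ i ≪ ν)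
    (hbdd : ∀ g : α → ℝ≥0∞, Measurable g → ∫⁻ x, g x ∂ν ≠ ∞ →
      ∃ B : ℝ≥0∞, B ≠ ∞ ∧ ∀ i, ∫⁻ x, g x ∂κ i ≤ B) :
    ∃ M : ℝ≥0∞, M ≠ ∞ ∧ ∀ i, κ i ≤ M • ν := by
  by_contra! hcon
  have hbad (n : ℕ) : ∃ i A, MeasurableSet A ∧ 4 ^ n * ν A < κ i A := by
    obtain ⟨i, hi⟩ := hcon (4 ^ n) (by finiteness)
    simp only [Measure.le_iff, Measure.smul_apply, smul_eq_mul, not_forall, not_le,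
      exists_prop] at hi
    exact ⟨i, hi⟩
  choose i A hA hlt using hbad
  have hA0 (n : ℕ) : ν (A n) ≠ 0 := fun h0 => (hlt n).not_ge (by simp [hκ (i n) h0])
  have hAtop (n : ℕ) : ν (A n) ≠ ∞ := fun htop => by
    simpa [htop, ENNReal.mul_top] using hlt n
  let a (n : ℕ) : ℝ≥0∞ := 2⁻¹ ^ n / ν (A n)
  let G (x : α) : ℝ≥0∞ := ∑' n, (A n).indicator (fun _ => a n) x
  have hG_meas : Measurable G := Measurable.tsum fun n => measurable_const.indicator (hA n)
  have hG_int : ∫⁻ x, G x ∂ν = 2 := by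
    rw [lintegral_tsum fun n => (measurable_const.indicator (hA n)).aemeasurable]
    simp_rw [lintegral_indicator_const (hA _), a, ENNReal.div_mul_cancel (hA0 _) (hAtop _)]
    rw [ENNReal.tsum_geometric, ENNReal.one_sub_inv_two, inv_inv]
  have hG_low (n : ℕ) : 2 ^ n ≤ ∫⁻ x, G x ∂κ (i n) :=
    calc (2 : ℝ≥0∞) ^ n = a n * (4 ^ n * ν (A n)) := by
          rw [mul_comm (4 ^ n), ← mul_assoc, ENNReal.div_mul_cancel (hA0 n) (hAtop n), ← mul_pow]
          congr 1
          rw [show (4 : ℝ≥0∞) = 2 * 2 by norm_num, ← mul_assoc,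
            ENNReal.inv_mul_cancel two_ne_zero ENNReal.ofNat_ne_top, one_mul]
      _ ≤ a n * κ (i n) (A n) := by gcongr; exact (hlt n).le
      _ = ∫⁻ x, (A n).indicator (fun _ => a n) x ∂κ (i n) :=
          (lintegral_indicator_const (hA n) _).symm
      _ ≤ ∫⁻ x, G x ∂κ (i n) := lintegral_mono fun _ => ENNReal.le_tsum n
  obtain ⟨B, hB, hle⟩ := hbdd G hG_meas (by simp [hG_int])
  obtain ⟨n, hn⟩ := ENNReal.exists_nat_gt hB
  have hn_pow : (n : ℝ≥0∞) ≤ 2 ^ n := by exact_mod_cast n.lt_two_pow_self.le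
  exact (hn.trans_le hn_pow).not_ge ((hG_low n).trans (hle (i n)))

lemma exists_forall_le_smul_of_tendsto_lintegral {κ : ℝ → Measure α}
    (hloc : ∀ T, ∃ C : ℝ≥0∞, C ≠ ∞ ∧ ∀ t ∈ Set.Icc 0 T, κ t ≤ C • ν)
    (hlim : ∀ g : α → ℝ≥0∞, Measurable g → ∫⁻ x, g x ∂ν ≠ ∞ →
      Tendsto (fun t => ∫⁻ x, g x ∂κ t) atTop (𝓝 0)) :
    ∃ M : ℝ≥0∞, M ≠ ∞ ∧ ∀ t, 0 ≤ t → κ t ≤ M • ν := by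
  have hac (t : Set.Ici (0 : ℝ)) : κ t ≪ ν := by
    obtain ⟨C, -, hC⟩ := hloc t
    exact Measure.absolutelyContinuous_of_le_smul (hC t ⟨t.2, le_rfl⟩)
  suffices ∃ M : ℝ≥0∞, M ≠ ∞ ∧ ∀ t : Set.Ici (0 : ℝ), κ t ≤ M • ν by simpa using this
  refine exists_forall_le_smul_of_lintegral_le hac fun g hg hfin => ?_
  obtain ⟨T, hT⟩ := eventually_atTop.1 ((hlim g hg hfin).eventually_le_const one_pos)
  obtain ⟨C, hC, hCle⟩ := hloc T
  refine ⟨max 1 (C * ∫⁻ x, g x ∂ν), by finiteness, fun ⟨t, ht⟩ => ?_⟩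
  rcases le_total T t with hTt | htT
  · exact (hT t hTt).trans (le_max_left _ _)
  · calc ∫⁻ x, g x ∂κ t ≤ ∫⁻ x, g x ∂(C • ν) := lintegral_mono' (hCle t ⟨ht, htT⟩) le_rfl
      _ = C * ∫⁻ x, g x ∂ν := lintegral_smul_measure _ _
      _ ≤ _ := le_max_right _ _

lemma tendsto_lintegral_zero_of_eventually_notMem {l : Filter ι} [l.IsCountablyGenerated]
    {κ : ι → Measure α} {D : ι → Set α} {M : ℝ≥0∞} (hM : M ≠ ∞) (hκ : ∀ᶠ i in l, κ i ≤ M • ν)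
    (hD : ∀ᶠ i in l, MeasurableSet (D i)) (hD_ae : ∀ᶠ i in l, ∀ᵐ x ∂κ i, x ∈ D i)
    (hleave : ∀ᵐ x ∂ν, ∀ᶠ i in l, x ∉ D i)
    {g : α → ℝ≥0∞} (hg : Measurable g) (hfin : ∫⁻ x, g x ∂ν ≠ ∞) :
    Tendsto (fun i => ∫⁻ x, g x ∂κ i) l (𝓝 0) := by
  have hlim : Tendsto (fun i => ∫⁻ x, (D i).indicator g x ∂ν) l (𝓝 (∫⁻ _, 0 ∂ν)) := by
    refine tendsto_lintegral_filter_of_dominated_convergence g ?_ ?_ hfin ?_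
    · exact hD.mono fun i hi => hg.indicator hi
    · exact .of_forall fun i => .of_forall fun x => Set.indicator_le_self _ _ _
    · filter_upwards [hleave] with x hx
      exact tendsto_const_nhds.congr' (hx.mono fun i hi => (Set.indicator_of_notMem hi g).symm)
  have hlimM : Tendsto (fun i => M * ∫⁻ x, (D i).indicator g x ∂ν) l (𝓝 0) := by
    simpa using ENNReal.Tendsto.const_mul hlim (Or.inr hM)
  refine tendsto_of_tendsto_of_tendsto_of_le_of_le' tendsto_const_nhds hlimM
    (.of_forall fun _ => zero_le) ?_
  filter_upwards [hκ, hD_ae] with i hi hDi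
  calc ∫⁻ x, g x ∂κ i = ∫⁻ x, (D i).indicator g x ∂κ i :=
        lintegral_congr_ae (hDi.mono fun x hx => (Set.indicator_of_mem hx g).symm)
    _ ≤ ∫⁻ x, (D i).indicator g x ∂(M • ν) := lintegral_mono' hi le_rfl
    _ = M * ∫⁻ x, (D i).indicator g x ∂ν := lintegral_smul_measure _ _

lemma tendsto_lintegral_exp_mul_zero {k : α → ℝ} (hk : AEMeasurable k ν)
    (hneg : ∀ᵐ x ∂ν, k x < 0) {g : α → ℝ≥0∞} (hg : Measurable g) (hfin : ∫⁻ x, g x ∂ν ≠ ∞) :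
    Tendsto (fun t => ∫⁻ x, ENNReal.ofReal (Real.exp (t * k x)) * g x ∂ν) atTop (𝓝 0) := by
  rw [← lintegral_zero (μ := ν)]
  refine tendsto_lintegral_filter_of_dominated_convergence' g ?_ ?_ hfin ?_
  · exact .of_forall fun t => (hk.const_mul t).exp.ennreal_ofReal.mul hg.aemeasurable
  · filter_upwards [eventually_ge_atTop 0] with t ht
    filter_upwards [hneg] with x hx
    refine mul_le_of_le_one_left' (ENNReal.ofReal_le_one.2 (Real.exp_le_one_iff.2 ?_))
    exact mul_nonpos_of_nonneg_of_nonpos ht hx.le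
  · filter_upwards [hneg, ae_lt_top hg hfin] with x hx hgx
    have hexp : Tendsto (fun t : ℝ => Real.exp (t * k x)) atTop (𝓝 0) :=
      Real.tendsto_exp_atBot.comp (tendsto_id.atTop_mul_const_of_neg hx)
    simpa using ENNReal.Tendsto.mul_const (ENNReal.tendsto_ofReal hexp) (Or.inr hgx.ne)

lemma ae_neg_of_tendsto_lintegral_exp_mul [SigmaFinite ν] {k : α → ℝ} (hk : AEMeasurable k ν)
    (hlim : ∀ g : α → ℝ≥0∞, Measurable g → ∫⁻ x, g x ∂ν ≠ ∞ →
      Tendsto (fun t => ∫⁻ x, ENNReal.ofReal (Real.exp (t * k x)) * g x ∂ν) atTop (𝓝 0)) :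
    ∀ᵐ x ∂ν, k x < 0 := by
  refine ae_of_forall_measure_lt_top_ae_restrict _ fun s hs hs_fin => ae_iff.2 ?_
  have hlow : ∀ᶠ t in atTop, ν.restrict s {x | ¬k x < 0} ≤
      ∫⁻ x, ENNReal.ofReal (Real.exp (t * k x)) * s.indicator 1 x ∂ν := by
    filter_upwards [eventually_ge_atTop 0] with t ht
    calc ν.restrict s {x | ¬k x < 0}
        ≤ ν.restrict s {x | 1 ≤ ENNReal.ofReal (Real.exp (t * k x))} :=
          measure_mono fun x hx => ENNReal.one_le_ofReal.2
            (Real.one_le_exp (mul_nonneg ht (not_lt.1 hx)))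
      _ ≤ ∫⁻ x in s, ENNReal.ofReal (Real.exp (t * k x)) ∂ν := by
          simpa using mul_meas_ge_le_lintegral₀
            (hk.restrict.const_mul t).exp.ennreal_ofReal 1
      _ = _ := by
          rw [← lintegral_indicator hs]
          congr with x
          by_cases hx : x ∈ s <;> simp [hx]
  refine nonpos_iff_eq_zero.1 (ge_of_tendsto (hlim _ (measurable_one.indicator hs) ?_) hlow)
  simpa [lintegral_indicator_one hs] using hs_fin.ne

theorem forall_tendsto_lintegral_zero_iff [SigmaFinite ν] {κ : ℝ → Measure α} {Z : Set α}
    {D : ℝ → Set α} {k : α → ℝ}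
    (hloc : ∀ T, ∃ C : ℝ≥0∞, C ≠ ∞ ∧ ∀ t ∈ Set.Icc 0 T, κ t ≤ C • ν)
    (hZ : MeasurableSet Z) (hk : AEMeasurable k (ν.restrict Z))
    (hκZ : ∀ t, 0 ≤ t → (κ t).restrict Z =
      (ν.restrict Z).withDensity fun x => ENNReal.ofReal (Real.exp (t * k x)))
    (hD : ∀ t, 0 ≤ t → MeasurableSet (D t)) (hD_ae : ∀ t, 0 ≤ t → ∀ᵐ x ∂κ t, x ∈ D t)
    (hleave : ∀ᵐ x ∂ν, x ∉ Z → ∀ᶠ t in atTop, x ∉ D t) :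
    (∀ g : α → ℝ≥0∞, Measurable g → ∫⁻ x, g x ∂ν ≠ ∞ →
        Tendsto (fun t => ∫⁻ x, g x ∂κ t) atTop (𝓝 0)) ↔
      (∃ M : ℝ≥0∞, M ≠ ∞ ∧ ∀ t, 0 ≤ t → κ t ≤ M • ν) ∧ ∀ᵐ x ∂ν.restrict Z, k x < 0 := by
  have hZ_lintegral {g : α → ℝ≥0∞} (hg : Measurable g) : ∀ᶠ t in atTop,
      ∫⁻ x in Z, g x ∂κ t = ∫⁻ x in Z, ENNReal.ofReal (Real.exp (t * k x)) * g x ∂ν := by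
    filter_upwards [eventually_ge_atTop 0] with t ht
    rw [hκZ t ht, lintegral_withDensity_eq_lintegral_mul₀
      (hk.const_mul t).exp.ennreal_ofReal hg.aemeasurable]
    rfl
  constructor
  · refine fun hlim => ⟨exists_forall_le_smul_of_tendsto_lintegral hloc hlim,
      ae_neg_of_tendsto_lintegral_exp_mul hk fun g hg hfin => ?_⟩
    rw [← lintegral_indicator hZ] at hfin
    refine (hlim _ (hg.indicator hZ) hfin).congr' ?_
    filter_upwards [hZ_lintegral hg] with t ht
    rw [lintegral_indicator hZ, ht]
  · rintro ⟨⟨M, hM, hκM⟩, hneg⟩ g hg hfin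
    have hfin_restrict (s : Set α) : ∫⁻ x in s, g x ∂ν ≠ ∞ :=
      ne_top_of_le_ne_top hfin (setLIntegral_le_lintegral s g)
    have hlimZ : Tendsto (fun t => ∫⁻ x in Z, g x ∂κ t) atTop (𝓝 0) :=
      (tendsto_lintegral_exp_mul_zero hk hneg hg (hfin_restrict Z)).congr'
        ((hZ_lintegral hg).mono fun _ => Eq.symm)
    have hlimZc : Tendsto (fun t => ∫⁻ x in Zᶜ, g x ∂κ t) atTop (𝓝 0) := by
      refine tendsto_lintegral_zero_of_eventually_notMem (ν := ν.restrict Zᶜ) (D := D) hM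
        ?_ ?_ ?_ ?_ hg (hfin_restrict Zᶜ)
      · filter_upwards [eventually_ge_atTop 0] with t ht
        rw [← Measure.restrict_smul]
        exact Measure.restrict_mono subset_rfl (hκM t ht)
      · exact (eventually_ge_atTop 0).mono hD
      · exact (eventually_ge_atTop 0).mono fun t ht => ae_restrict_of_ae (hD_ae t ht)
      · exact (ae_restrict_iff' hZ.compl).2 hleave
    simpa only [lintegral_add_compl _ hZ, add_zero] using hlimZ.add hlimZc

end DominatedMeasures

/-- The measure `μ` reweighted by a real density `ρ`, so that `L^p_ρ` is `L^p` of this measure;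
negative values of `ρ` count as zero. -/
noncomputable def weightedMeasure {α : Type*} [MeasurableSpace α] (μ : Measure α)
    (ρ : α → ℝ) : Measure α :=
  μ.withDensity fun x => ENNReal.ofReal (ρ x)

/-- The measure `κ` for which `∫ |c • f ∘ ψ|^p dν = ∫ |f|^p dκ`, so that the weighted composition
operator `f ↦ c • f ∘ ψ` on `L^p(ν)` is encoded by `κ`. For the time-`t` operator of the semigroup
on `L^p_ρ`, its Lebesgue density is the paper's `ρ_{t,p}`. -/
noncomputable def transferMeasure {α β : Type*} [MeasurableSpace α] [MeasurableSpace β]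
    (p : ℝ) (c : α → ℝ) (ψ : α → β) (ν : Measure α) : Measure β :=
  (ν.withDensity fun x => ‖c x‖ₑ ^ p).map ψ

section TransferMeasure

variable {α β : Type*} {mα : MeasurableSpace α} {mβ : MeasurableSpace β} {ν : Measure α} {p : ℝ}
  {c : α → ℝ}

lemma lintegral_transferMeasure {ψ : α → β} (hc : AEMeasurable c ν) (hψ : AEMeasurable ψ ν)
    {g : β → ℝ≥0∞} (hg : Measurable g) :
    ∫⁻ y, g y ∂transferMeasure p c ψ ν = ∫⁻ x, ‖c x‖ₑ ^ p * g (ψ x) ∂ν := by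
  rw [transferMeasure, lintegral_map' hg.aemeasurable
    (hψ.mono_ac (withDensity_absolutelyContinuous _ _))]
  exact lintegral_withDensity_eq_lintegral_mul₀ (hc.enorm.pow_const p) (hg.comp_aemeasurable hψ)

lemma lintegral_enorm_rpow_transferMeasure (hp : 0 ≤ p) {ψ : α → β} (hc : AEMeasurable c ν)
    (hψ : AEMeasurable ψ ν) {f : β → ℝ} (hf : Measurable f) :
    ∫⁻ y, ‖f y‖ₑ ^ p ∂transferMeasure p c ψ ν = ∫⁻ x, ‖c x * f (ψ x)‖ₑ ^ p ∂ν := by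
  simp_rw [lintegral_transferMeasure hc hψ (hf.enorm.pow_const p), enorm_mul,
    ENNReal.mul_rpow_of_nonneg _ _ hp]

lemma ae_transferMeasure_mem {ψ : α → β} (hψ : AEMeasurable ψ ν) {D : Set β}
    (hD : MeasurableSet D) (hψD : ∀ᵐ x ∂ν, ψ x ∈ D) : ∀ᵐ y ∂transferMeasure p c ψ ν, y ∈ D := by
  have hac := withDensity_absolutelyContinuous ν fun x => ‖c x‖ₑ ^ p
  exact (ae_map_iff (hψ.mono_ac hac) hD).2 (hac.ae_le hψD)

lemma restrict_transferMeasure_of_ae_eq_self {ψ : α → α} (hc : AEMeasurable c ν)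
    (hψ : AEMeasurable ψ ν) {Z : Set α} (hZ : MeasurableSet Z)
    (hfix : ∀ᵐ x ∂ν, x ∈ Z → ψ x = x) (hpre : ∀ᵐ x ∂ν, ψ x ∈ Z → x ∈ Z) :
    (transferMeasure p c ψ ν).restrict Z = (ν.restrict Z).withDensity fun x => ‖c x‖ₑ ^ p := by
  ext s hs
  have hsZ := hs.inter hZ
  calc (transferMeasure p c ψ ν).restrict Z s
      = ∫⁻ x, ‖c x‖ₑ ^ p * (s ∩ Z).indicator 1 (ψ x) ∂ν := by
        rw [Measure.restrict_apply hs, ← lintegral_indicator_one hsZ,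
          lintegral_transferMeasure hc hψ (measurable_one.indicator hsZ)]
    _ = ∫⁻ x, (s ∩ Z).indicator (fun x => ‖c x‖ₑ ^ p) x ∂ν := by
        refine lintegral_congr_ae ?_
        filter_upwards [hfix, hpre] with x hfix hpre
        by_cases hx : x ∈ Z
        · by_cases hxs : x ∈ s <;> simp [hfix hx, hx, hxs]
        · simp [hx, mt hpre hx]
    _ = (ν.restrict Z).withDensity (fun x => ‖c x‖ₑ ^ p) s := by
        rw [lintegral_indicator hsZ, withDensity_apply _ hs, Measure.restrict_restrict hs]

end TransferMeasure

section WeightedLp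

variable {α ι : Type*} {mα : MeasurableSpace α} {μ : Measure α} {p : ℝ} {ρ : α → ℝ}

lemma weightedMeasure_absolutelyContinuous (μ : Measure α) (ρ : α → ℝ) : weightedMeasure μ ρ ≪ μ :=
  withDensity_absolutelyContinuous _ _

lemma absolutelyContinuous_weightedMeasure (hρ : AEMeasurable ρ μ) (hρ0 : ∀ᵐ x ∂μ, 0 < ρ x) :
    μ ≪ weightedMeasure μ ρ :=
  withDensity_absolutelyContinuous' hρ.ennreal_ofReal
    (hρ0.mono fun _ hx => (ENNReal.ofReal_pos.2 hx).ne')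

lemma ae_restrict_weightedMeasure_restrict_iff {s t : Set α} (hs : MeasurableSet s) (hts : t ⊆ s)
    (hρ : AEMeasurable ρ (μ.restrict s)) (hρ0 : ∀ x ∈ s, 0 < ρ x) {P : α → Prop} :
    (∀ᵐ x ∂(weightedMeasure (μ.restrict s) ρ).restrict t, P x) ↔ ∀ᵐ x ∂μ.restrict t, P x := by
  rw [← Measure.restrict_restrict_of_subset (μ := μ) hts]
  have hpos : ∀ᵐ x ∂μ.restrict s, 0 < ρ x := (ae_restrict_mem hs).mono hρ0
  exact ⟨fun hP => ((absolutelyContinuous_weightedMeasure hρ hpos).restrict t).ae_le hP,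
    fun hP => ((weightedMeasure_absolutelyContinuous _ ρ).restrict t).ae_le hP⟩

lemma weightedMeasure_apply (hρ : AEMeasurable ρ μ) {A : Set α} (hA : MeasurableSet A) :
    weightedMeasure μ ρ A = ∫⁻ x, ENNReal.ofReal (ρ x) * A.indicator 1 x ∂μ := by
  rw [← lintegral_indicator_one hA]
  exact lintegral_withDensity_eq_lintegral_mul₀ hρ.ennreal_ofReal
    (measurable_one.indicator hA).aemeasurable

lemma transferMeasure_weightedMeasure_apply {β : Type*} {mβ : MeasurableSpace β} {c : α → ℝ}
    {ψ : α → β} (hc : AEMeasurable c μ) (hψ : AEMeasurable ψ μ) (hρ : AEMeasurable ρ μ)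
    {A : Set β} (hA : MeasurableSet A) :
    transferMeasure p c ψ (weightedMeasure μ ρ) A =
      ∫⁻ x, ENNReal.ofReal (ρ x) * (‖c x‖ₑ ^ p * A.indicator 1 (ψ x)) ∂μ := by
  have hac : weightedMeasure μ ρ ≪ μ := weightedMeasure_absolutelyContinuous μ ρ
  have hA_meas : Measurable (A.indicator 1 : β → ℝ≥0∞) := measurable_one.indicator hA
  rw [← lintegral_indicator_one hA,
    lintegral_transferMeasure (hc.mono_ac hac) (hψ.mono_ac hac) hA_meas]
  exact lintegral_withDensity_eq_lintegral_mul₀ hρ.ennreal_ofReal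
    ((hc.enorm.pow_const p).mul (hA_meas.comp_aemeasurable hψ))

lemma lintegral_enorm_rpow_weightedMeasure (hp : 0 ≤ p) {f : α → ℝ} (hf : AEMeasurable f μ)
    (hρ : AEMeasurable ρ μ) : ∫⁻ x, ‖f x‖ₑ ^ p ∂weightedMeasure μ ρ =
      ∫⁻ x, ENNReal.ofReal (|f x| ^ p * ρ x) ∂μ := by
  rw [weightedMeasure, lintegral_withDensity_eq_lintegral_mul₀ hρ.ennreal_ofReal
    (hf.enorm.pow_const p)]
  refine lintegral_congr fun x => ?_
  rw [Pi.mul_apply, ENNReal.ofReal_mul (by positivity), Real.enorm_eq_ofReal_abs,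
    ENNReal.ofReal_rpow_of_nonneg (abs_nonneg _) hp, mul_comm]

lemma integral_abs_rpow_mul_eq_toReal (hp : 0 ≤ p) {f : α → ℝ} (hf : AEMeasurable f μ)
    (hρ : AEMeasurable ρ μ) (hρ0 : ∀ᵐ x ∂μ, 0 ≤ ρ x) :
    ∫ x, |f x| ^ p * ρ x ∂μ = (∫⁻ x, ‖f x‖ₑ ^ p ∂weightedMeasure μ ρ).toReal := by
  rw [lintegral_enorm_rpow_weightedMeasure hp hf hρ, integral_eq_lintegral_of_nonneg_ae]
  · filter_upwards [hρ0] with x hx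
    exact mul_nonneg (by positivity) hx
  · exact ((hf.abs.pow_const p).mul hρ).aestronglyMeasurable

lemma integrable_abs_rpow_mul_iff (hp : 0 ≤ p) {f : α → ℝ} (hf : AEMeasurable f μ)
    (hρ : AEMeasurable ρ μ) (hρ0 : ∀ᵐ x ∂μ, 0 ≤ ρ x) :
    Integrable (fun x => |f x| ^ p * ρ x) μ ↔ ∫⁻ x, ‖f x‖ₑ ^ p ∂weightedMeasure μ ρ ≠ ∞ := by
  have hmeas : AEStronglyMeasurable (fun x => |f x| ^ p * ρ x) μ :=
    ((hf.abs.pow_const p).mul hρ).aestronglyMeasurable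
  rw [lintegral_enorm_rpow_weightedMeasure hp hf hρ, ← lt_top_iff_ne_top,
    ← hasFiniteIntegral_iff_ofReal, Integrable, and_iff_right hmeas]
  filter_upwards [hρ0] with x hx
  exact mul_nonneg (by positivity) hx

lemma integral_abs_mul_comp_rpow_mul_eq_toReal (hp : 0 ≤ p) {c : α → ℝ} (hc : AEMeasurable c μ)
    {ψ : α → α} (hψ : AEMeasurable ψ μ) (hρ : AEMeasurable ρ μ) (hρ0 : ∀ᵐ x ∂μ, 0 ≤ ρ x)
    {f : α → ℝ} (hf : Measurable f) :
    ∫ x, |c x * f (ψ x)| ^ p * ρ x ∂μ =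
      (∫⁻ x, ‖f x‖ₑ ^ p ∂transferMeasure p c ψ (weightedMeasure μ ρ)).toReal := by
  have hac : weightedMeasure μ ρ ≪ μ := weightedMeasure_absolutelyContinuous μ ρ
  have hcf : AEMeasurable (fun x => c x * f (ψ x)) μ := hc.mul (hf.comp_aemeasurable hψ)
  rw [lintegral_enorm_rpow_transferMeasure hp (hc.mono_ac hac) (hψ.mono_ac hac) hf,
    integral_abs_rpow_mul_eq_toReal hp hcf hρ hρ0]

lemma exists_measurable_enorm_rpow_ae_eq (hp : 0 < p) {g : α → ℝ≥0∞} (hg : Measurable g)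
    (hfin : ∫⁻ x, g x ∂μ ≠ ∞) :
    ∃ f : α → ℝ, Measurable f ∧ (fun x => ‖f x‖ₑ ^ p) =ᵐ[μ] g := by
  refine ⟨fun x => (g x).toReal ^ p⁻¹, hg.ennreal_toReal.pow_const _, ?_⟩
  filter_upwards [ae_lt_top hg hfin] with x hx
  have hroot : 0 ≤ (g x).toReal ^ p⁻¹ := by positivity
  rw [Real.enorm_of_nonneg hroot, ENNReal.ofReal_rpow_of_nonneg hroot hp.le,
    Real.rpow_inv_rpow ENNReal.toReal_nonneg hp.ne', ENNReal.ofReal_toReal hx.ne]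

/- Every `ν`-integrable function with values in `[0, ∞]` is `|f| ^ p` for some `f ∈ L^p(ν)`: this
removes the exponent from the problem. -/
lemma forall_tendsto_integral_iff_transferMeasure (hp : 0 < p) {l : Filter ι} {c : ι → α → ℝ}
    {ψ : ι → α → α} (hρ : AEMeasurable ρ μ) (hρ0 : ∀ᵐ x ∂μ, 0 ≤ ρ x)
    (hc : ∀ᶠ i in l, AEMeasurable (c i) μ) (hψ : ∀ᶠ i in l, AEMeasurable (ψ i) μ)
    (hκ : ∀ᶠ i in l, ∃ C : ℝ≥0∞, C ≠ ∞ ∧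
      transferMeasure p (c i) (ψ i) (weightedMeasure μ ρ) ≤ C • weightedMeasure μ ρ) :
    (∀ f : α → ℝ, Measurable f → Integrable (fun x => |f x| ^ p * ρ x) μ →
        Tendsto (fun i => ∫ x, |c i x * f (ψ i x)| ^ p * ρ x ∂μ) l (𝓝 0)) ↔
      ∀ g : α → ℝ≥0∞, Measurable g → ∫⁻ x, g x ∂weightedMeasure μ ρ ≠ ∞ →
        Tendsto (fun i => ∫⁻ x, g x ∂transferMeasure p (c i) (ψ i) (weightedMeasure μ ρ))
          l (𝓝 0) := by
  have hreal {f : α → ℝ} (hf : Measurable f) :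
      (fun i => ∫ x, |c i x * f (ψ i x)| ^ p * ρ x ∂μ) =ᶠ[l] fun i =>
        (∫⁻ x, ‖f x‖ₑ ^ p ∂transferMeasure p (c i) (ψ i) (weightedMeasure μ ρ)).toReal := by
    filter_upwards [hc, hψ] with i hci hψi
    exact integral_abs_mul_comp_rpow_mul_eq_toReal hp.le hci hψi hρ hρ0 hf
  constructor
  · intro hlim g hg hfin
    obtain ⟨f, hf, hfg⟩ := exists_measurable_enorm_rpow_ae_eq hp hg hfin
    have hf_fin : ∫⁻ x, ‖f x‖ₑ ^ p ∂weightedMeasure μ ρ ≠ ∞ := by rwa [lintegral_congr_ae hfg]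
    have hlim_f := (hlim f hf ((integrable_abs_rpow_mul_iff hp.le hf.aemeasurable hρ hρ0).2
      hf_fin)).congr' (hreal hf)
    rw [← ENNReal.ofReal_zero]
    refine (ENNReal.tendsto_ofReal hlim_f).congr' ?_
    filter_upwards [hκ] with i ⟨C, hC, hle⟩
    rw [lintegral_congr_ae ((Measure.absolutelyContinuous_of_le_smul hle).ae_le hfg)]
    refine ENNReal.ofReal_toReal (ne_top_of_le_ne_top ?_ (lintegral_mono' hle le_rfl))
    rw [lintegral_smul_measure]
    exact ENNReal.mul_ne_top hC hfin
  · intro hlim f hf hfi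
    have hlim_f := hlim _ (hf.enorm.pow_const p)
      ((integrable_abs_rpow_mul_iff hp.le hf.aemeasurable hρ hρ0).1 hfi)
    exact ((ENNReal.tendsto_toReal ENNReal.zero_ne_top).comp hlim_f).congr' (hreal hf).symm

lemma integral_le_mul_integral_of_transferMeasure_le (hp : 0 ≤ p) {c : α → ℝ} {ψ : α → α}
    (hρ : AEMeasurable ρ μ) (hρ0 : ∀ᵐ x ∂μ, 0 ≤ ρ x) (hc : AEMeasurable c μ)
    (hψ : AEMeasurable ψ μ) {M : ℝ≥0∞} (hM : M ≠ ∞)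
    (hκ : transferMeasure p c ψ (weightedMeasure μ ρ) ≤ M • weightedMeasure μ ρ)
    {f : α → ℝ} (hf : Measurable f) (hfi : Integrable (fun x => |f x| ^ p * ρ x) μ) :
    ∫ x, |c x * f (ψ x)| ^ p * ρ x ∂μ ≤ M.toReal * ∫ x, |f x| ^ p * ρ x ∂μ := by
  have hfin := (integrable_abs_rpow_mul_iff hp hf.aemeasurable hρ hρ0).1 hfi
  rw [integral_abs_mul_comp_rpow_mul_eq_toReal hp hc hψ hρ hρ0 hf,
    integral_abs_rpow_mul_eq_toReal hp hf.aemeasurable hρ hρ0, ← ENNReal.toReal_mul,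
    ← smul_eq_mul, ← lintegral_smul_measure]
  refine ENNReal.toReal_mono ?_ (lintegral_mono' hκ le_rfl)
  rw [lintegral_smul_measure]
  exact ENNReal.mul_ne_top hM hfin

lemma transferMeasure_le_of_integral_le_mul_integral (hp : 0 < p) {c : α → ℝ} {ψ : α → α}
    (hρ : AEMeasurable ρ μ) (hρ0 : ∀ᵐ x ∂μ, 0 ≤ ρ x) (hc : AEMeasurable c μ)
    (hψ : AEMeasurable ψ μ) {C : ℝ≥0∞} (hC : C ≠ ∞)
    (hκ : transferMeasure p c ψ (weightedMeasure μ ρ) ≤ C • weightedMeasure μ ρ)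
    {M : ℝ} (hM : 0 < M)
    (hbound : ∀ f : α → ℝ, Measurable f → Integrable (fun x => |f x| ^ p * ρ x) μ →
      ∫ x, |c x * f (ψ x)| ^ p * ρ x ∂μ ≤ M * ∫ x, |f x| ^ p * ρ x ∂μ) :
    transferMeasure p c ψ (weightedMeasure μ ρ) ≤ ENNReal.ofReal M • weightedMeasure μ ρ := by
  refine Measure.le_iff.2 fun A hA => ?_
  rw [Measure.smul_apply, smul_eq_mul]
  by_cases hA_top : weightedMeasure μ ρ A = ∞
  · simp [hA_top, ENNReal.mul_top, hM]
  have hκA_top : transferMeasure p c ψ (weightedMeasure μ ρ) A ≠ ∞ :=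
    ne_top_of_le_ne_top (ENNReal.mul_ne_top hC hA_top) (hκ A)
  let f : α → ℝ := A.indicator 1
  have hf : Measurable f := measurable_one.indicator hA
  have hf_lintegral (ν : Measure α) : ∫⁻ x, ‖f x‖ₑ ^ p ∂ν = ν A := by
    rw [← lintegral_indicator_one hA]
    congr with x
    by_cases hx : x ∈ A <;> simp [f, hx, hp]
  have hfA := hbound f hf ((integrable_abs_rpow_mul_iff hp.le hf.aemeasurable hρ hρ0).2
    (by rwa [hf_lintegral]))
  rw [integral_abs_mul_comp_rpow_mul_eq_toReal hp.le hc hψ hρ hρ0 hf,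
    integral_abs_rpow_mul_eq_toReal hp.le hf.aemeasurable hρ hρ0, hf_lintegral, hf_lintegral] at hfA
  rw [← ENNReal.ofReal_toReal hκA_top, ← ENNReal.ofReal_toReal hA_top, ← ENNReal.ofReal_mul hM.le]
  exact ENNReal.ofReal_le_ofReal hfA

lemma exists_forall_integral_le_iff_transferMeasure (hp : 0 < p) {S : Set ι} {c : ι → α → ℝ}
    {ψ : ι → α → α} (hρ : AEMeasurable ρ μ) (hρ0 : ∀ᵐ x ∂μ, 0 ≤ ρ x)
    (hc : ∀ i ∈ S, AEMeasurable (c i) μ) (hψ : ∀ i ∈ S, AEMeasurable (ψ i) μ)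
    (hκ : ∀ i ∈ S, ∃ C : ℝ≥0∞, C ≠ ∞ ∧
      transferMeasure p (c i) (ψ i) (weightedMeasure μ ρ) ≤ C • weightedMeasure μ ρ) :
    (∃ M : ℝ, ∀ i ∈ S, ∀ f : α → ℝ, Measurable f → Integrable (fun x => |f x| ^ p * ρ x) μ →
        ∫ x, |c i x * f (ψ i x)| ^ p * ρ x ∂μ ≤ M * ∫ x, |f x| ^ p * ρ x ∂μ) ↔
      ∃ M : ℝ≥0∞, M ≠ ∞ ∧ ∀ i ∈ S,
        transferMeasure p (c i) (ψ i) (weightedMeasure μ ρ) ≤ M • weightedMeasure μ ρ := by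
  constructor
  · rintro ⟨M, hM⟩
    refine ⟨ENNReal.ofReal (max M 1), ENNReal.ofReal_ne_top, fun i hi => ?_⟩
    obtain ⟨C, hC, hle⟩ := hκ i hi
    refine transferMeasure_le_of_integral_le_mul_integral hp hρ hρ0 (hc i hi) (hψ i hi) hC hle
      (by positivity) fun f hf hfi => (hM i hi f hf hfi).trans ?_
    refine mul_le_mul_of_nonneg_right (le_max_left M 1) (integral_nonneg_of_ae ?_)
    filter_upwards [hρ0] with x hx
    exact mul_nonneg (by positivity) hx
  · rintro ⟨M, hM, hle⟩
    exact ⟨M.toReal, fun i hi f hf hfi => integral_le_mul_integral_of_transferMeasure_le hp.le hρ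
      hρ0 (hc i hi) (hψ i hi) hM (hle i hi) hf hfi⟩

end WeightedLp

section ChangeOfVariables

variable {E : Type*} [NormedAddCommGroup E] [NormedSpace ℝ E] [FiniteDimensional ℝ E]
  {ψ : E → E}

lemma differentiableAt_of_det_fderiv_ne_zero {x : E} (hdet : (fderiv ℝ ψ x).det ≠ 0) :
    DifferentiableAt ℝ ψ x := by
  by_contra hx
  rw [fderiv_zero_of_not_differentiableAt hx] at hdet
  cases subsingleton_or_nontrivial E
  · exact hx (differentiable_of_subsingleton x)
  · exact hdet (LinearMap.det_zero.trans (zero_pow Module.finrank_pos.ne'))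

lemma ae_differentiableAt_of_pos_mul_abs_det {mE : MeasurableSpace E} {ν : Measure E} {k : E → ℝ}
    (hdet : ∀ᵐ x ∂ν, 0 < k x * |(fderiv ℝ ψ x).det|) : ∀ᵐ x ∂ν, DifferentiableAt ℝ ψ x := by
  filter_upwards [hdet] with x hx
  exact differentiableAt_of_det_fderiv_ne_zero (abs_ne_zero.1 (right_ne_zero_of_mul hx.ne'))

variable [MeasurableSpace E] [BorelSpace E] {μ : Measure E} {s : Set E}

lemma exists_measurableSet_differentiableAt_restrict_eq (hs : MeasurableSet s)
    (hψ : ∀ᵐ x ∂μ.restrict s, DifferentiableAt ℝ ψ x) :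
    ∃ S ⊆ s, MeasurableSet S ∧ (∀ x ∈ S, DifferentiableAt ℝ ψ x) ∧
      μ.restrict S = μ.restrict s := by
  have := FiniteDimensional.complete ℝ E
  have hD := measurableSet_of_differentiableAt ℝ ψ
  refine ⟨{x | DifferentiableAt ℝ ψ x} ∩ s, Set.inter_subset_right, hD.inter hs,
    fun x hx => hx.1, ?_⟩
  rw [← Measure.restrict_restrict hD, Measure.restrict_eq_self_of_ae_mem]
  exact hψ

lemma aemeasurable_restrict_of_ae_differentiableAt (hs : MeasurableSet s)
    (hψ : ∀ᵐ x ∂μ.restrict s, DifferentiableAt ℝ ψ x) : AEMeasurable ψ (μ.restrict s) := by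
  obtain ⟨S, -, hS, hψS, hSs⟩ := exists_measurableSet_differentiableAt_restrict_eq hs hψ
  rw [← hSs]
  exact ContinuousOn.aemeasurable (fun x hx => (hψS x hx).continuousAt.continuousWithinAt) hS

lemma exists_measurableSet_subset_image_ae_mem (hs : MeasurableSet s) (hinj : Set.InjOn ψ s)
    (hψ : ∀ᵐ x ∂μ.restrict s, DifferentiableAt ℝ ψ x) :
    ∃ D ⊆ ψ '' s, MeasurableSet D ∧ ∀ᵐ x ∂μ.restrict s, ψ x ∈ D := by
  obtain ⟨S, hSs, hS, hψS, hμS⟩ := exists_measurableSet_differentiableAt_restrict_eq hs hψ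
  have hcont : ContinuousOn ψ S := fun x hx => (hψS x hx).continuousAt.continuousWithinAt
  refine ⟨ψ '' S, Set.image_mono hSs, hS.image_of_continuousOn_injOn hcont (hinj.mono hSs), ?_⟩
  rw [← hμS]
  exact (ae_restrict_mem hS).mono fun x hx => Set.mem_image_of_mem ψ hx

lemma transferMeasure_weightedMeasure_restrict_le [μ.IsAddHaarMeasure] (hs : MeasurableSet s)
    {t : Set E} (hmaps : Set.MapsTo ψ s t) (hinj : Set.InjOn ψ s)
    (hψ : ∀ᵐ x ∂μ.restrict s, DifferentiableAt ℝ ψ x) {p : ℝ} (hp : 0 ≤ p) {c ρ : E → ℝ}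
    (hc : AEMeasurable c (μ.restrict s)) (hρ : Measurable ρ) {C : ℝ} (hC : 0 ≤ C)
    (hadm : ∀ᵐ x ∂μ.restrict s, |c x| ^ p * ρ x ≤ C * ρ (ψ x) * |(fderiv ℝ ψ x).det|) :
    transferMeasure p c ψ (weightedMeasure (μ.restrict s) ρ) ≤
      ENNReal.ofReal C • weightedMeasure (μ.restrict t) ρ := by
  have hψ_meas := aemeasurable_restrict_of_ae_differentiableAt hs hψ
  obtain ⟨S, hSs, hS, hψS, hμS⟩ := exists_measurableSet_differentiableAt_restrict_eq hs hψ
  have hderiv (x : E) (hx : x ∈ S) : HasFDerivWithinAt ψ (fderiv ℝ ψ x) S x :=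
    (hψS x hx).hasFDerivAt.hasFDerivWithinAt
  refine Measure.le_iff.2 fun A hA => ?_
  calc transferMeasure p c ψ (weightedMeasure (μ.restrict s) ρ) A
      = ∫⁻ x in s, ENNReal.ofReal (ρ x) * (‖c x‖ₑ ^ p * A.indicator 1 (ψ x)) ∂μ :=
        transferMeasure_weightedMeasure_apply hc hψ_meas hρ.aemeasurable hA
    _ ≤ ∫⁻ x in S, ENNReal.ofReal C * (ENNReal.ofReal |(fderiv ℝ ψ x).det| *
          (ENNReal.ofReal (ρ (ψ x)) * A.indicator 1 (ψ x))) ∂μ := by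
        rw [hμS]
        refine lintegral_mono_ae ?_
        filter_upwards [hadm] with x hx
        have hx_ofReal := ENNReal.ofReal_le_ofReal hx
        rw [ENNReal.ofReal_mul (by positivity), ENNReal.ofReal_mul' (abs_nonneg _),
          ENNReal.ofReal_mul hC, ← ENNReal.ofReal_rpow_of_nonneg (abs_nonneg _) hp,
          ← Real.enorm_eq_ofReal_abs] at hx_ofReal
        calc _ = ‖c x‖ₑ ^ p * ENNReal.ofReal (ρ x) * A.indicator 1 (ψ x) := by ring
          _ ≤ _ := mul_le_mul_left hx_ofReal _
          _ = _ := by ring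
    _ = ENNReal.ofReal C * ∫⁻ y in ψ '' S, ENNReal.ofReal (ρ y) * A.indicator 1 y ∂μ := by
        rw [lintegral_const_mul' _ _ ENNReal.ofReal_ne_top,
          lintegral_image_eq_lintegral_abs_det_fderiv_mul μ hS hderiv (hinj.mono hSs)]
    _ ≤ ENNReal.ofReal C * ∫⁻ y in t, ENNReal.ofReal (ρ y) * A.indicator 1 y ∂μ := by
        gcongr
        exact ((hmaps.mono_left hSs).image_subset)
    _ = (ENNReal.ofReal C • weightedMeasure (μ.restrict t) ρ) A := by
        rw [Measure.smul_apply, weightedMeasure_apply hρ.aemeasurable hA, smul_eq_mul]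

end ChangeOfVariables

lemma aestronglyMeasurable_intervalIntegral_of_continuous {α E : Type*} {mα : MeasurableSpace α}
    {μ : Measure α} [NormedAddCommGroup E] [NormedSpace ℝ E] {u : ℝ → α → E}
    (hcont : ∀ᵐ x ∂μ, Continuous fun s => u s x) (hu : ∀ s, AEStronglyMeasurable (u s) μ)
    (a b : ℝ) : AEStronglyMeasurable (fun x => ∫ s in a..b, u s x) μ := by
  have hrat : ∀ᵐ x ∂μ, ∀ q : ℚ, u q x = (hu q).mk (u q) x := ae_all_iff.2 fun q => (hu q).ae_eq_mk
  obtain ⟨N, hN_ae, hN, hNu⟩ := (hcont.and hrat).exists_measurable_mem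
  let v (s : ℝ) : α → E := N.indicator (u s)
  have hv_cont (x : α) : Continuous fun s => v s x := by
    by_cases hx : x ∈ N
    · simpa only [v, Set.indicator_of_mem hx] using (hNu x hx).1
    · simpa only [v, Set.indicator_of_notMem hx] using continuous_const
  have hv_rat (q : ℚ) : StronglyMeasurable (v q) := by
    have hvq : v q = N.indicator ((hu q).mk (u q)) :=
      Set.indicator_congr fun x hx => (hNu x hx).2 q
    exact hvq ▸ (hu q).stronglyMeasurable_mk.indicator hN
  have hv (s : ℝ) : StronglyMeasurable (v s) := by
    obtain ⟨q, -, -, hq⟩ := Real.exists_seq_rat_strictMono_tendsto s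
    exact stronglyMeasurable_of_tendsto atTop (fun n => hv_rat (q n))
      (tendsto_pi_nhds.2 fun x => ((hv_cont x).tendsto s).comp hq)
  have hv_uncurry := stronglyMeasurable_uncurry_of_continuous_of_stronglyMeasurable hv_cont hv
  refine ⟨fun x => ∫ s in a..b, v s x, ?_, ?_⟩
  · simp only [intervalIntegral]
    exact hv_uncurry.integral_prod_left.sub hv_uncurry.integral_prod_left
  · filter_upwards [hN_ae] with x hx
    simp only [v, Set.indicator_of_mem hx]

lemma measurableSet_zeros_of_continuousOn {α β : Type*} [TopologicalSpace α] [MeasurableSpace α]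
    [OpensMeasurableSpace α] [TopologicalSpace β] [T1Space β] [Zero β] {f : α → β} {s : Set α}
    (hs : MeasurableSet s) (hf : ContinuousOn f s) : MeasurableSet {x ∈ s | f x = 0} := by
  obtain ⟨C, hC, hCs⟩ := continuousOn_iff_isClosed.1 hf {0} isClosed_singleton
  have hzeros : {x ∈ s | f x = 0} = C ∩ s := by
    rw [← hCs, Set.inter_comm]
    rfl
  exact hzeros ▸ hC.measurableSet.inter hs

section Semiflow

variable {E : Type*} [NormedAddCommGroup E] [NormedSpace ℝ E] {F : E → E} {Ω : Set E}

lemma locallyLipschitzOn_of_contDiffOn_of_isOpen (hF : ContDiffOn ℝ 1 F Ω) (hΩ : IsOpen Ω) :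
    LocallyLipschitzOn Ω F := fun _ hx =>
  let ⟨K, U, hU, hK⟩ := (hF.contDiffAt (hΩ.mem_nhds hx)).exists_lipschitzOnWith
  ⟨K, U, mem_nhdsWithin_of_mem_nhds hU, hK⟩

lemma eqOn_Ici_of_hasDerivWithinAt (hF : LocallyLipschitzOn Ω F) {u v : ℝ → E}
    (hu : ∀ t, 0 ≤ t → HasDerivWithinAt u (F (u t)) (Set.Ici 0) t) (huΩ : ∀ t, 0 ≤ t → u t ∈ Ω)
    (hv : ∀ t, 0 ≤ t → HasDerivWithinAt v (F (v t)) (Set.Ici 0) t) (hvΩ : ∀ t, 0 ≤ t → v t ∈ Ω)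
    {t₀ : ℝ} (ht₀ : 0 ≤ t₀) (huv : u t₀ = v t₀) : Set.EqOn u v (Set.Ici 0) := by
  intro t ht
  let T := max t t₀
  have hcu : ContinuousOn u (Set.Icc 0 T) := fun r hr =>
    (hu r hr.1).continuousWithinAt.mono Set.Icc_subset_Ici_self
  have hcv : ContinuousOn v (Set.Icc 0 T) := fun r hr =>
    (hv r hr.1).continuousWithinAt.mono Set.Icc_subset_Ici_self
  let S := u '' Set.Icc 0 T ∪ v '' Set.Icc 0 T
  have hSΩ : S ⊆ Ω := Set.union_subset (Set.image_subset_iff.2 fun r hr => huΩ r hr.1)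
    (Set.image_subset_iff.2 fun r hr => hvΩ r hr.1)
  obtain ⟨K, hK⟩ := (hF.mono hSΩ).exists_lipschitzOnWith_of_compact
    ((isCompact_Icc.image_of_continuousOn hcu).union (isCompact_Icc.image_of_continuousOn hcv))
  have huS {r : ℝ} (hr : r ∈ Set.Icc 0 T) : u r ∈ S := Or.inl (Set.mem_image_of_mem u hr)
  have hvS {r : ℝ} (hr : r ∈ Set.Icc 0 T) : v r ∈ S := Or.inr (Set.mem_image_of_mem v hr)
  rcases le_total t₀ t with htt | htt
  · have hsub : Set.Icc t₀ t ⊆ Set.Icc 0 T := Set.Icc_subset_Icc ht₀ (le_max_left _ _)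
    exact ODE_solution_unique_of_mem_Icc_right (v := fun _ => F) (s := fun _ => S)
      (fun _ _ => hK) (hcu.mono hsub)
      (fun r hr => (hu r (ht₀.trans hr.1)).mono (Set.Ici_subset_Ici.2 (ht₀.trans hr.1)))
      (fun r hr => huS (hsub (Set.Ico_subset_Icc_self hr))) (hcv.mono hsub)
      (fun r hr => (hv r (ht₀.trans hr.1)).mono (Set.Ici_subset_Ici.2 (ht₀.trans hr.1)))
      (fun r hr => hvS (hsub (Set.Ico_subset_Icc_self hr))) huv ⟨htt, le_rfl⟩
  · have hsub : Set.Icc 0 t₀ ⊆ Set.Icc 0 T := Set.Icc_subset_Icc_right (le_max_right _ _)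
    exact ODE_solution_unique_of_mem_Icc_left (v := fun _ => F) (s := fun _ => S)
      (fun _ _ => hK) (hcu.mono hsub)
      (fun r hr => ((hu r hr.1.le).hasDerivAt (Ici_mem_nhds hr.1)).hasDerivWithinAt)
      (fun r hr => huS (hsub (Set.Ioc_subset_Icc_self hr))) (hcv.mono hsub)
      (fun r hr => ((hv r hr.1.le).hasDerivAt (Ici_mem_nhds hr.1)).hasDerivWithinAt)
      (fun r hr => hvS (hsub (Set.Ioc_subset_Icc_self hr))) huv ⟨ht, htt⟩

/-- `φ` is the semiflow of the vector field `F` on `Ω`: `φ t x` is the position at time `t ≥ 0` of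
the solution of `u' = F u` which starts at `x ∈ Ω` and stays in `Ω`. Nothing is assumed about
`φ t x` for `t < 0` or `x ∉ Ω`. -/
structure IsSemiflowOn (φ : ℝ → E → E) (F : E → E) (Ω : Set E) : Prop where
  map_zero : ∀ x ∈ Ω, φ 0 x = x
  map_mem : ∀ t, 0 ≤ t → ∀ x ∈ Ω, φ t x ∈ Ω
  hasDerivWithinAt : ∀ x ∈ Ω, ∀ t, 0 ≤ t →
    HasDerivWithinAt (fun s => φ s x) (F (φ t x)) (Set.Ici 0) t

namespace IsSemiflowOn

variable {φ : ℝ → E → E} {s t : ℝ} {x : E}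

lemma map_add (hφ : IsSemiflowOn φ F Ω) (hF : LocallyLipschitzOn Ω F) (hs : 0 ≤ s) (ht : 0 ≤ t)
    (hx : x ∈ Ω) : φ (t + s) x = φ t (φ s x) := by
  have hxs := hφ.map_mem s hs x hx
  have hshift (r : ℝ) (hr : 0 ≤ r) :
      HasDerivWithinAt (fun r => φ (r + s) x) (F (φ (r + s) x)) (Set.Ici 0) r := by
    have hr_add : HasDerivWithinAt (fun r : ℝ => r + s) 1 (Set.Ici 0) r :=
      ((hasDerivAt_id r).add_const s).hasDerivWithinAt
    simpa only [one_smul, Function.comp_def] using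
      (hφ.hasDerivWithinAt x hx (r + s) (add_nonneg hr hs)).scomp r hr_add
        fun _ hy => add_nonneg hy hs
  refine eqOn_Ici_of_hasDerivWithinAt hF hshift
    (fun r hr => hφ.map_mem _ (add_nonneg hr hs) x hx) (hφ.hasDerivWithinAt _ hxs)
    (fun r hr => hφ.map_mem r hr _ hxs) le_rfl ?_ ht
  rw [zero_add, hφ.map_zero _ hxs]

lemma injOn (hφ : IsSemiflowOn φ F Ω) (hF : LocallyLipschitzOn Ω F) (ht : 0 ≤ t) :
    Set.InjOn (φ t) Ω := fun x hx y hy hxy => by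
  have hxy0 := eqOn_Ici_of_hasDerivWithinAt hF (hφ.hasDerivWithinAt x hx)
    (fun r hr => hφ.map_mem r hr x hx) (hφ.hasDerivWithinAt y hy)
    (fun r hr => hφ.map_mem r hr y hy) ht hxy Set.self_mem_Ici
  simpa only [hφ.map_zero x hx, hφ.map_zero y hy] using hxy0

lemma map_eq_self (hφ : IsSemiflowOn φ F Ω) (hF : LocallyLipschitzOn Ω F) (ht : 0 ≤ t)
    (hx : x ∈ Ω) (hFx : F x = 0) : φ t x = x :=
  eqOn_Ici_of_hasDerivWithinAt hF (hφ.hasDerivWithinAt x hx) (fun r hr => hφ.map_mem r hr x hx)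
    (v := fun _ => x) (fun _ _ => hFx ▸ hasDerivWithinAt_const _ _ _) (fun _ _ => hx) le_rfl
    (hφ.map_zero x hx) ht

lemma eq_zero_of_map_eq_zero (hφ : IsSemiflowOn φ F Ω) (hF : LocallyLipschitzOn Ω F) (ht : 0 ≤ t)
    (hx : x ∈ Ω) (hFx : F (φ t x) = 0) : F x = 0 := by
  have hxt := hφ.map_mem t ht x hx
  have hfix : φ t x = x := hφ.injOn hF ht hxt hx (hφ.map_eq_self hF ht hxt hFx)
  rwa [hfix] at hFx

lemma image_subset_image (hφ : IsSemiflowOn φ F Ω) (hF : LocallyLipschitzOn Ω F) (hs : 0 ≤ s)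
    (hst : s ≤ t) : φ t '' Ω ⊆ φ s '' Ω := by
  rintro _ ⟨x, hx, rfl⟩
  refine ⟨φ (t - s) x, hφ.map_mem _ (sub_nonneg.2 hst) x hx, ?_⟩
  rw [← hφ.map_add hF (sub_nonneg.2 hst) hs hx, add_sub_cancel]

lemma eventually_notMem_image (hφ : IsSemiflowOn φ F Ω) (hF : LocallyLipschitzOn Ω F) (hs : 0 ≤ s)
    (hx : x ∉ φ s '' Ω) : ∀ᶠ t in atTop, x ∉ φ t '' Ω :=
  (eventually_ge_atTop s).mono fun _ hst hxt => hx (hφ.image_subset_image hF hs hst hxt)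

lemma continuous_max_zero (hφ : IsSemiflowOn φ F Ω) (hx : x ∈ Ω) :
    Continuous fun s => φ (max s 0) x :=
  ContinuousOn.comp_continuous
    (fun t ht => (hφ.hasDerivWithinAt x hx t ht).continuousWithinAt)
    (continuous_id.max continuous_const) fun s => le_max_right s 0

end IsSemiflowOn

/-- The cocycle `h_t(x) = exp (∫₀ᵗ h(φ(s,x)) ds)` of a semiflow on a normed space, the weight of the
semigroup `T_{F,h}`; on `ℝ` this is `cocycle`. -/
noncomputable def flowCocycle (h : E → ℝ) (φ : ℝ → E → E) (t : ℝ) (x : E) : ℝ :=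
  Real.exp (∫ s in (0 : ℝ)..t, h (φ s x))

variable {φ : ℝ → E → E} {h : E → ℝ} {t : ℝ}

lemma flowCocycle_eq_exp_mul (hφ : IsSemiflowOn φ F Ω) (hF : LocallyLipschitzOn Ω F) (ht : 0 ≤ t)
    {x : E} (hx : x ∈ Ω) (hFx : F x = 0) : flowCocycle h φ t x = Real.exp (t * h x) := by
  have hconst : Set.EqOn (fun s => h (φ s x)) (fun _ => h x) (Set.uIcc 0 t) := fun s hs => by
    rw [Set.uIcc_of_le ht] at hs
    simp only [hφ.map_eq_self hF hs.1 hx hFx]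
  rw [flowCocycle, intervalIntegral.integral_congr hconst, intervalIntegral.integral_const,
    sub_zero, smul_eq_mul]

lemma aemeasurable_flowCocycle [MeasurableSpace E] [BorelSpace E] {μ : Measure E}
    (hφ : IsSemiflowOn φ F Ω) (hφ_meas : ∀ s, 0 ≤ s → AEMeasurable (φ s) (μ.restrict Ω))
    (hΩ : MeasurableSet Ω) (hh : ContinuousOn h Ω) (ht : 0 ≤ t) :
    AEMeasurable (flowCocycle h φ t) (μ.restrict Ω) := by
  have hmem : ∀ᵐ x ∂μ.restrict Ω, x ∈ Ω := ae_restrict_mem hΩ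
  have hint : AEStronglyMeasurable (fun x => ∫ s in (0 : ℝ)..t, h (φ (max s 0) x))
      (μ.restrict Ω) := by
    refine aestronglyMeasurable_intervalIntegral_of_continuous ?_ (fun s => ?_) 0 t
    · filter_upwards [hmem] with x hx
      exact hh.comp_continuous (hφ.continuous_max_zero hx)
        fun s => hφ.map_mem _ (le_max_right s 0) x hx
    · classical
      have hh_meas : Measurable (Ω.piecewise h 0) :=
        hh.measurable_piecewise continuousOn_const hΩ
      refine ((hh_meas.comp_aemeasurable (hφ_meas _ (le_max_right s 0))).congr
        ?_).aestronglyMeasurable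
      filter_upwards [hmem] with x hx
      exact Set.piecewise_eq_of_mem _ _ _ (hφ.map_mem _ (le_max_right s 0) x hx)
  have hmax (x : E) : ∫ s in (0 : ℝ)..t, h (φ (max s 0) x) = ∫ s in (0 : ℝ)..t, h (φ s x) := by
    refine intervalIntegral.integral_congr fun s hs => ?_
    rw [Set.uIcc_of_le ht] at hs
    simp only [max_eq_left hs.1]
  simp only [hmax] at hint
  exact hint.aemeasurable.exp

end Semiflow

section Admissible

variable {E : Type*} [NormedAddCommGroup E] [NormedSpace ℝ E] [MeasurableSpace E] {μ : Measure E}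
  {p : ℝ} {h : E → ℝ} {φ : ℝ → E → E} {F : E → E} {Ω : Set E} {ρ : E → ℝ}

/-- The weight `ρ` on `Ω` is `p`-admissible for the semigroup with semiflow `φ` and cocycle
generated by `h`: the inequality which makes the operators of the semigroup bounded on `L^p_ρ(Ω)`,
with at most exponential growth in time. -/
def IsAdmissibleWeight (μ : Measure E) (p : ℝ) (h : E → ℝ) (φ : ℝ → E → E) (Ω : Set E)
    (ρ : E → ℝ) : Prop :=
  ∃ M ω : ℝ, ∀ t, 0 ≤ t → ∀ᵐ x ∂μ.restrict Ω,
    |flowCocycle h φ t x| ^ p * ρ x ≤ M * Real.exp (ω * t) * ρ (φ t x) * |(fderiv ℝ (φ t) x).det|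

lemma isAdmissibleWeight_real_iff {μ : Measure ℝ} {h : ℝ → ℝ} {φ : ℝ → ℝ → ℝ} {Ω : Set ℝ}
    {ρ : ℝ → ℝ} : IsAdmissibleWeight μ p h φ Ω ρ ↔
      ∃ M ω : ℝ, ∀ t, 0 ≤ t → ∀ᵐ x ∂μ.restrict Ω,
        |flowCocycle h φ t x| ^ p * ρ x ≤ M * Real.exp (ω * t) * ρ (φ t x) * |deriv (φ t) x| := by
  simp only [IsAdmissibleWeight, ← toSpanSingleton_deriv, ContinuousLinearMap.det_toSpanSingleton]

namespace IsAdmissibleWeight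

lemma ae_differentiableAt [FiniteDimensional ℝ E] (hadm : IsAdmissibleWeight μ p h φ Ω ρ)
    (hΩ : MeasurableSet Ω) (hρ0 : ∀ x ∈ Ω, 0 < ρ x) {t : ℝ} (ht : 0 ≤ t) :
    ∀ᵐ x ∂μ.restrict Ω, DifferentiableAt ℝ (φ t) x := by
  obtain ⟨M, ω, hM⟩ := hadm
  refine ae_differentiableAt_of_pos_mul_abs_det
    (k := fun x => M * Real.exp (ω * t) * ρ (φ t x)) ?_
  filter_upwards [hM t ht, ae_restrict_mem hΩ] with x hx hxΩ
  have hcoc : 0 < flowCocycle h φ t x := Real.exp_pos _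
  have := hρ0 x hxΩ
  exact lt_of_lt_of_le (by positivity) hx

variable [FiniteDimensional ℝ E] [BorelSpace E]

lemma aemeasurable_flow (hadm : IsAdmissibleWeight μ p h φ Ω ρ) (hΩ : MeasurableSet Ω)
    (hρ0 : ∀ x ∈ Ω, 0 < ρ x) {t : ℝ} (ht : 0 ≤ t) : AEMeasurable (φ t) (μ.restrict Ω) :=
  aemeasurable_restrict_of_ae_differentiableAt hΩ (hadm.ae_differentiableAt hΩ hρ0 ht)

lemma exists_forall_transferMeasure_le [μ.IsAddHaarMeasure]
    (hadm : IsAdmissibleWeight μ p h φ Ω ρ) (hφ : IsSemiflowOn φ F Ω)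
    (hF : LocallyLipschitzOn Ω F) (hΩ : MeasurableSet Ω) (hp : 0 ≤ p)
    (hc : ∀ t, 0 ≤ t → AEMeasurable (flowCocycle h φ t) (μ.restrict Ω))
    (hρ0 : ∀ x ∈ Ω, 0 < ρ x) (hρ : Measurable ρ) (T : ℝ) :
    ∃ C : ℝ≥0∞, C ≠ ∞ ∧ ∀ t ∈ Set.Icc 0 T,
      transferMeasure p (flowCocycle h φ t) (φ t) (weightedMeasure (μ.restrict Ω) ρ) ≤
        C • weightedMeasure (μ.restrict Ω) ρ := by
  have hdiff := fun t => hadm.ae_differentiableAt hΩ hρ0 (t := t)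
  obtain ⟨M, ω, hM⟩ := hadm
  refine ⟨ENNReal.ofReal (|M| * Real.exp (|ω| * T)), ENNReal.ofReal_ne_top, fun t ⟨ht, htT⟩ => ?_⟩
  refine transferMeasure_weightedMeasure_restrict_le hΩ (hφ.map_mem t ht) (hφ.injOn hF ht)
    (hdiff t ht) hp (hc t ht) hρ (by positivity) ?_
  filter_upwards [hM t ht, ae_restrict_mem hΩ] with x hx hxΩ
  have hρt := hρ0 _ (hφ.map_mem t ht x hxΩ)
  refine hx.trans ?_
  gcongr
  · exact le_abs_self M
  · exact le_abs_self ω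

end IsAdmissibleWeight

lemma restrict_zeros_transferMeasure_flowCocycle (hφ : IsSemiflowOn φ F Ω)
    (hF : LocallyLipschitzOn Ω F) (hZ : MeasurableSet {x ∈ Ω | F x = 0}) {ν : Measure E}
    (hν : ∀ᵐ x ∂ν, x ∈ Ω) {t : ℝ} (ht : 0 ≤ t) (hc : AEMeasurable (flowCocycle h φ t) ν)
    (hφt : AEMeasurable (φ t) ν) (hp : 0 ≤ p) :
    (transferMeasure p (flowCocycle h φ t) (φ t) ν).restrict {x ∈ Ω | F x = 0} =
      (ν.restrict {x ∈ Ω | F x = 0}).withDensity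
        fun x => ENNReal.ofReal (Real.exp (t * (p * h x))) := by
  have hfix : ∀ x ∈ {x ∈ Ω | F x = 0}, φ t x = x := fun x hx => hφ.map_eq_self hF ht hx.1 hx.2
  rw [restrict_transferMeasure_of_ae_eq_self hc hφt hZ (.of_forall hfix)]
  · refine withDensity_congr_ae ?_
    filter_upwards [ae_restrict_mem hZ] with x hx
    rw [flowCocycle_eq_exp_mul hφ hF ht hx.1 hx.2, Real.enorm_of_nonneg (Real.exp_nonneg _),
      ENNReal.ofReal_rpow_of_nonneg (Real.exp_nonneg _) hp, ← Real.exp_mul]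
    ring_nf
  · filter_upwards [hν] with x hx hxt
    exact ⟨hx, hφ.eq_zero_of_map_eq_zero hF ht hx hxt.2⟩

theorem forall_tendsto_lintegral_flow_iff [FiniteDimensional ℝ E] [BorelSpace E]
    [μ.IsAddHaarMeasure] (hΩ : MeasurableSet Ω) (hp : 0 < p) (hF : LocallyLipschitzOn Ω F)
    (hh : ContinuousOn h Ω) (hφ : IsSemiflowOn φ F Ω) (hρ0 : ∀ x ∈ Ω, 0 < ρ x) (hρ : Measurable ρ)
    (hadm : IsAdmissibleWeight μ p h φ Ω ρ)
    (hleave : ∀ x ∈ Ω, F x ≠ 0 → ∃ tb, 0 < tb ∧ x ∉ φ tb '' Ω) :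
    (∀ g : E → ℝ≥0∞, Measurable g → ∫⁻ x, g x ∂weightedMeasure (μ.restrict Ω) ρ ≠ ∞ →
        Tendsto (fun t => ∫⁻ x, g x
          ∂transferMeasure p (flowCocycle h φ t) (φ t) (weightedMeasure (μ.restrict Ω) ρ))
          atTop (𝓝 0)) ↔
      (∃ M : ℝ≥0∞, M ≠ ∞ ∧ ∀ t, 0 ≤ t →
        transferMeasure p (flowCocycle h φ t) (φ t) (weightedMeasure (μ.restrict Ω) ρ) ≤
          M • weightedMeasure (μ.restrict Ω) ρ) ∧
      ∀ᵐ x ∂(weightedMeasure (μ.restrict Ω) ρ).restrict {x ∈ Ω | F x = 0}, h x < 0 := by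
  have hneg (x : E) : h x < 0 ↔ p * h x < 0 := (smul_neg_iff_of_pos_left hp).symm
  simp_rw +singlePass [hneg]
  have : SigmaFinite (weightedMeasure (μ.restrict Ω) ρ) := SigmaFinite.withDensity_ofReal ρ
  have hac := weightedMeasure_absolutelyContinuous (μ.restrict Ω) ρ
  have hmem : ∀ᵐ x ∂weightedMeasure (μ.restrict Ω) ρ, x ∈ Ω := hac.ae_le (ae_restrict_mem hΩ)
  have hφ_meas := fun t (ht : 0 ≤ t) => hadm.aemeasurable_flow hΩ hρ0 ht
  have hc_meas := fun t (ht : 0 ≤ t) => aemeasurable_flowCocycle hφ hφ_meas hΩ hh ht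
  have hZ := measurableSet_zeros_of_continuousOn hΩ hF.continuousOn
  choose! D hD_sub hD hD_ae using fun t (ht : 0 ≤ t) =>
    exists_measurableSet_subset_image_ae_mem hΩ (hφ.injOn hF ht)
      (hadm.ae_differentiableAt hΩ hρ0 ht)
  refine forall_tendsto_lintegral_zero_iff (k := fun x => p * h x) (D := D)
    (hadm.exists_forall_transferMeasure_le hφ hF hΩ hp.le hc_meas hρ0 hρ) hZ ?_ ?_ hD ?_ ?_
  · exact (((hh.aemeasurable hΩ).const_mul p).mono_ac hac).restrict
  · exact fun t ht => restrict_zeros_transferMeasure_flowCocycle hφ hF hZ hmem ht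
      ((hc_meas t ht).mono_ac hac) ((hφ_meas t ht).mono_ac hac) hp.le
  · exact fun t ht => ae_transferMeasure_mem ((hφ_meas t ht).mono_ac hac) (hD t ht)
      (hac.ae_le (hD_ae t ht))
  · filter_upwards [hmem] with x hx hxZ
    obtain ⟨tb, htb, hxtb⟩ := hleave x hx fun hFx => hxZ ⟨hx, hFx⟩
    filter_upwards [hφ.eventually_notMem_image hF htb.le hxtb, eventually_ge_atTop 0] with t hxt ht
    exact fun hxD => hxt (hD_sub t ht hxD)

end Admissible

lemma measure_pos_imp_ae_restrict_iff {α : Type*} {mα : MeasurableSpace α} {μ : Measure α}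
    {s : Set α} {P : α → Prop} :
    (0 < μ s → ∀ᵐ x ∂μ.restrict s, P x) ↔ ∀ᵐ x ∂μ.restrict s, P x := by
  refine ⟨fun hP => ?_, fun hP _ => hP⟩
  rcases eq_zero_or_pos (μ s) with hs | hs
  · simp [Measure.restrict_eq_zero.2 hs]
  · exact hP hs

theorem stmt9_general {E : Type*} [NormedAddCommGroup E] [NormedSpace ℝ E]
    [FiniteDimensional ℝ E] [MeasurableSpace E] [BorelSpace E] {μ : Measure E}
    [μ.IsAddHaarMeasure] {Ω : Set E} (hΩ : MeasurableSet Ω) {p : ℝ} (hp : 0 < p) {F : E → E}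
    (hF : LocallyLipschitzOn Ω F) {h : E → ℝ} (hh : ContinuousOn h Ω) {φ : ℝ → E → E}
    (hφ : IsSemiflowOn φ F Ω) {ρ : E → ℝ} (hρ0 : ∀ x ∈ Ω, 0 < ρ x) (hρ : Measurable ρ)
    (hadm : IsAdmissibleWeight μ p h φ Ω ρ)
    (hleave : ∀ x ∈ Ω, F x ≠ 0 → ∃ tb, 0 < tb ∧ x ∉ φ tb '' Ω) :
    (∀ f : E → ℝ, Measurable f → IntegrableOn (fun x => |f x| ^ p * ρ x) Ω μ →
        Tendsto (fun t => ∫ x in Ω, |flowCocycle h φ t x * f (φ t x)| ^ p * ρ x ∂μ)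
          atTop (𝓝 0)) ↔
      (∃ M : ℝ, ∀ t, 0 ≤ t → ∀ f : E → ℝ, Measurable f →
          IntegrableOn (fun x => |f x| ^ p * ρ x) Ω μ →
          ∫ x in Ω, |flowCocycle h φ t x * f (φ t x)| ^ p * ρ x ∂μ ≤
            M * ∫ x in Ω, |f x| ^ p * ρ x ∂μ) ∧
      (0 < μ {x ∈ Ω | F x = 0} → ∀ᵐ x ∂μ.restrict {x ∈ Ω | F x = 0}, h x < 0) := by
  have hφ_meas := fun t (ht : 0 ≤ t) => hadm.aemeasurable_flow hΩ hρ0 ht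
  have hc_meas := fun t (ht : 0 ≤ t) => aemeasurable_flowCocycle hφ hφ_meas hΩ hh ht
  have hρ_nonneg : ∀ᵐ x ∂μ.restrict Ω, 0 ≤ ρ x :=
    (ae_restrict_mem hΩ).mono fun x hx => (hρ0 x hx).le
  have hκ (t : ℝ) (ht : 0 ≤ t) : ∃ C : ℝ≥0∞, C ≠ ∞ ∧
      transferMeasure p (flowCocycle h φ t) (φ t) (weightedMeasure (μ.restrict Ω) ρ) ≤
        C • weightedMeasure (μ.restrict Ω) ρ :=
    let ⟨C, hC, hle⟩ := hadm.exists_forall_transferMeasure_le hφ hF hΩ hp.le hc_meas hρ0 hρ t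
    ⟨C, hC, hle t ⟨ht, le_rfl⟩⟩
  have hstable := forall_tendsto_integral_iff_transferMeasure (l := atTop) hp hρ.aemeasurable
    hρ_nonneg ((eventually_ge_atTop 0).mono hc_meas) ((eventually_ge_atTop 0).mono hφ_meas)
    ((eventually_ge_atTop 0).mono hκ)
  have hbounded := exists_forall_integral_le_iff_transferMeasure (S := Set.Ici 0) hp hρ.aemeasurable
    hρ_nonneg hc_meas hφ_meas hκ
  have hneg := ae_restrict_weightedMeasure_restrict_iff (μ := μ) (P := fun x => h x < 0) hΩ
    (Set.sep_subset Ω fun x => F x = 0) hρ.aemeasurable hρ0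
  rw [measure_pos_imp_ae_restrict_iff]
  exact hstable.trans ((forall_tendsto_lintegral_flow_iff hΩ hp hF hh hφ hρ0 hρ hadm hleave).trans
    (and_congr hbounded.symm hneg))

/-- Corollary: if every point of Ω₁ = {F ≠ 0} eventually leaves φ(t,Ω), then the
weighted composition semigroup T_{F,h} on L^p_ρ(Ω) is stable iff it is bounded and,
whenever λ(Ω₀) > 0, h < 0 a.e. on Ω₀ = {F = 0}. -/
theorem stmt9 (Ω : Set ℝ) (hΩ : IsOpen Ω) (p : ℝ) (hp : 1 ≤ p)
    (F : ℝ → ℝ) (hF : ContDiffOn ℝ 1 F Ω)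
    (h : ℝ → ℝ) (hh : ContinuousOn h Ω)
    (φ : ℝ → ℝ → ℝ)
    (hφ0 : ∀ x ∈ Ω, φ 0 x = x)
    (hmem : ∀ t : ℝ, 0 ≤ t → ∀ x ∈ Ω, φ t x ∈ Ω)
    (hode : ∀ x ∈ Ω, ∀ t : ℝ, 0 ≤ t →
      HasDerivWithinAt (fun s => φ s x) (F (φ t x)) (Set.Ici 0) t)
    (ρ : ℝ → ℝ) (hρpos : ∀ x ∈ Ω, 0 < ρ x) (hρmeas : Measurable ρ)
    (hρloc : ∀ K : Set ℝ, K ⊆ Ω → IsCompact K → IntegrableOn ρ K)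
    (hadm : ∃ M ω : ℝ, 1 ≤ M ∧ ∀ t : ℝ, 0 ≤ t →
      ∀ᵐ x ∂(volume.restrict Ω),
        |cocycle h φ t x| ^ p * ρ x ≤ M * Real.exp (ω * t) * ρ (φ t x) * |deriv (φ t) x|)
    (hleave : ∀ x ∈ Ω, F x ≠ 0 → ∃ tb : ℝ, 0 < tb ∧ x ∉ φ tb '' Ω) :
    (∀ f : ℝ → ℝ, Measurable f → IntegrableOn (fun x => |f x| ^ p * ρ x) Ω →
        Tendsto (fun t => ∫ x in Ω, |cocycle h φ t x * f (φ t x)| ^ p * ρ x)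
          atTop (𝓝 0)) ↔
      ((∃ M : ℝ, ∀ t : ℝ, 0 ≤ t → ∀ f : ℝ → ℝ, Measurable f →
          IntegrableOn (fun x => |f x| ^ p * ρ x) Ω →
          ∫ x in Ω, |cocycle h φ t x * f (φ t x)| ^ p * ρ x ≤
            M * ∫ x in Ω, |f x| ^ p * ρ x) ∧
        (0 < volume {x ∈ Ω | F x = 0} →
          ∀ᵐ x ∂(volume.restrict {x ∈ Ω | F x = 0}), h x < 0)) := by
  obtain ⟨M, ω, -, hM⟩ := hadm
  exact stmt9_general hΩ.measurableSet (zero_lt_one.trans_le hp)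
    (locallyLipschitzOn_of_contDiffOn_of_isOpen hF hΩ) hh ⟨hφ0, hmem, hode⟩ hρpos hρmeas
    (isAdmissibleWeight_real_iff.2 ⟨M, ω, hM⟩) hleave
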